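/- Every nontrivial quasi-diagram is an iterated expansion of a chord diagram: if α ∈ S_n is a quasi-diagram with α ≠ id, then there exist an integer r ≥ 0, a chord diagram β ∈ S_{n−r}, and positions i_1, …, i_r with i_k ∈ {1, …, n−r+k} for each k, such that α = ι_{i_r}(⋯ ι_{i_2}(ι_{i_1}(β)) ⋯). Moreover, if α is maximal then β can be chosen to be a maximal chord diagram. -/

import Mathlib

/-- The cycle `ϑ_{i,m+1} = (i, i+1, …, m+1)` of `S_{m+1}`; 0-indexed on `Fin (m+1)`, where
`a : Fin (m+1)` corresponds to `i`. -/
def vartheta {m : ℕ} (a : Fin (m + 1)) : Equiv.Perm (Fin (m + 1)) :=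
  Fin.revPerm * (Fin.cycleRange a.rev)⁻¹ * Fin.revPerm

/-- A permutation of `Fin m` regarded as a permutation of `Fin (m+1)` fixing the last point. -/
def castPerm {m : ℕ} (β : Equiv.Perm (Fin m)) : Equiv.Perm (Fin (m + 1)) :=
  β.viaFintypeEmbedding Fin.castSuccEmb

/-- The `i`-expansion `ι_i(β) = ϑ_{i,m+1} β ϑ_{i,m+1}⁻¹` of a quasi-diagram `β ∈ S_m`. -/
def expand {m : ℕ} (a : Fin (m + 1)) (β : Equiv.Perm (Fin m)) : Equiv.Perm (Fin (m + 1)) :=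
  vartheta a * castPerm β * (vartheta a)⁻¹

/-- `IsIterExpansionOf m β k γ` : the permutation `γ ∈ S_k` is an iterated expansion
`ι_{i_r}(⋯ ι_{i_1}(β) ⋯)` of `β ∈ S_m` (with `r = k - m ≥ 0` expansion steps). -/
inductive IsIterExpansionOf : (m : ℕ) → Equiv.Perm (Fin m) → (k : ℕ) → Equiv.Perm (Fin k) → Prop
  | refl (m : ℕ) (β : Equiv.Perm (Fin m)) : IsIterExpansionOf m β m β
  | step (m : ℕ) (β : Equiv.Perm (Fin m)) (k : ℕ) (γ : Equiv.Perm (Fin k)) (a : Fin (k + 1)) :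
      IsIterExpansionOf m β k γ → IsIterExpansionOf m β (k + 1) (expand a γ)

/-!
Undoing an expansion deletes an isolated point `a` and relabels the others in order. Since `α` fixes
`a`, an orbit of `ζα` that reaches `a` leaves it for `ζ(a)`, and `ζ` with `a` skipped is again the
standard cycle. So the permutation `ζβ` left after the deletion is the first-return map of `ζα` to
the complement of `a`, and a single orbit stays single. Deleting isolated points until none remain
gives the chord diagram.
-/

open Equiv Equiv.Perm

section Expand

variable {m : ℕ} (a : Fin (m + 1)) (β : Perm (Fin m))

theorem vartheta_last : vartheta a (Fin.last m) = a := by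
  simp [vartheta, Perm.inv_def]

theorem vartheta_castSucc (j : Fin m) : vartheta a j.castSucc = a.succAbove j := by
  simp [vartheta, Perm.inv_def, Fin.rev_castSucc, Fin.rev_succAbove]

theorem castPerm_last : castPerm β (Fin.last m) = Fin.last m :=
  viaFintypeEmbedding_apply_notMem_range _ _ <| by simp

theorem castPerm_castSucc (j : Fin m) : castPerm β j.castSucc = (β j).castSucc :=
  viaFintypeEmbedding_apply_image β Fin.castSuccEmb j

theorem expand_self : expand a β a = a := by
  have h : (vartheta a)⁻¹ a = Fin.last m := by rw [inv_eq_iff_eq, vartheta_last]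
  simp only [expand, Perm.mul_apply, h, castPerm_last, vartheta_last]

theorem expand_succAbove (j : Fin m) : expand a β (a.succAbove j) = a.succAbove (β j) := by
  have h : (vartheta a)⁻¹ (a.succAbove j) = j.castSucc := by
    rw [inv_eq_iff_eq, vartheta_castSucc]
  simp only [expand, Perm.mul_apply, h, castPerm_castSucc, vartheta_castSucc]

theorem cycleType_expand : (expand a β).cycleType = β.cycleType := by
  rw [expand, cycleType_conj, castPerm, viaFintypeEmbedding, cycleType_extendDomain]

theorem exists_expand_eq {α : Perm (Fin (m + 1))} (ha : α a = a) : ∃ β, expand a β = α := by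
  have hne (x : Fin (m + 1)) : α x ≠ a ↔ x ≠ a := by
    simpa only [ha] using α.injective.ne_iff (x := x) (y := a)
  refine ⟨(finSuccAboveEquiv a).symm.permCongr (α.subtypePerm hne), Perm.ext ?_⟩
  refine (Fin.forall_iff_succAbove a).2 ⟨(expand_self a _).trans ha.symm, fun j ↦ ?_⟩
  rw [expand_succAbove]
  exact congrArg Subtype.val ((finSuccAboveEquiv a).apply_symm_apply _)

end Expand

-- `hreturn` says that `g` is the first-return map of `f` to the range of `e`, every return taking
-- at most two steps.
theorem sameCycle_of_firstReturn {X Y : Type*} {f : Perm Y} {g : Perm X} {e : X → Y}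
    (he : Function.Injective e)
    (hreturn : ∀ x, f (e x) = e (g x) ∨ f (e x) ∉ Set.range e ∧ f (f (e x)) = e (g x))
    {x y : X} (hxy : f.SameCycle (e x) (e y)) : g.SameCycle x y := by
  have forward (k : ℕ) {x y : X} (hk : (f ^ k) (e x) = e y) : g.SameCycle x y := by
    induction k using Nat.strong_induction_on generalizing x with
    | _ k ih =>
      have of_return {l : ℕ} (hl : l < k) (h : (f ^ l) (e (g x)) = e y) : g.SameCycle x y :=
        sameCycle_apply_left.1 (ih l hl h)
      obtain _ | k := k
      · exact he hk ▸ .refl g x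
      rw [pow_succ, Perm.mul_apply] at hk
      rcases hreturn x with hone | ⟨hout, htwo⟩
      · exact of_return k.lt_succ_self (hone ▸ hk)
      obtain _ | k := k
      · exact absurd ⟨y, hk.symm⟩ hout
      · rw [pow_succ, Perm.mul_apply, htwo] at hk
        exact of_return (by omega) hk
  obtain ⟨k, hk⟩ := hxy
  obtain ⟨k, rfl | rfl⟩ := k.eq_nat_or_neg
  · exact forward k (by rwa [zpow_natCast] at hk)
  · refine (forward k ?_).symm
    rw [← hk, zpow_neg, zpow_natCast]
    simp

theorem finRotate_succAbove {m : ℕ} (a : Fin (m + 1)) (j : Fin m) :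
    finRotate (m + 1) (a.succAbove j) = a.succAbove (finRotate m j) ∨
      finRotate (m + 1) (a.succAbove j) = a ∧
        finRotate (m + 1) a = a.succAbove (finRotate m j) := by
  obtain _ | m := m
  · exact j.elim0
  · simp only [Fin.ext_iff, coe_finRotate, Fin.succAbove, Fin.lt_def, Fin.val_castSucc,
      apply_ite Fin.val, Fin.val_succ, Fin.val_last]
    grind

/-- Maximality of a quasi-diagram: `ζα` has at most one orbit. It is stated for every permutation,
and the empty one counts as maximal. -/
def IsMaximalDiagram {n : ℕ} (α : Perm (Fin n)) : Prop :=
  ∀ x y, (finRotate n * α).SameCycle x y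

theorem IsMaximalDiagram.of_expand {m : ℕ} {a : Fin (m + 1)} {β : Perm (Fin m)}
    (h : IsMaximalDiagram (expand a β)) : IsMaximalDiagram β := fun x y ↦ by
  refine sameCycle_of_firstReturn a.succAbove_right_injective (fun x ↦ ?_)
    (h (a.succAbove x) (a.succAbove y))
  simp only [Perm.mul_apply, expand_succAbove]
  rcases finRotate_succAbove a (β x) with hskip | ⟨hhit, hnext⟩
  · exact .inl hskip
  · refine .inr ⟨?_, ?_⟩
    · simp [hhit]
    · rw [hhit, expand_self, hnext]

namespace IsIterExpansionOf

variable {m n : ℕ} {α : Perm (Fin n)} {β : Perm (Fin m)}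

theorem cycleType_eq (h : IsIterExpansionOf m β n α) : β.cycleType = α.cycleType := by
  induction h with
  | refl => rfl
  | step k γ a _ ih => rw [cycleType_expand, ih]

theorem isMaximalDiagram (h : IsIterExpansionOf m β n α) (hα : IsMaximalDiagram α) :
    IsMaximalDiagram β := by
  induction h with
  | refl => exact hα
  | step k γ a _ ih => exact ih hα.of_expand

end IsIterExpansionOf

theorem exists_derangement_isIterExpansionOf {n : ℕ} (α : Perm (Fin n)) :
    ∃ (m : ℕ) (β : Perm (Fin m)), β ∈ derangements (Fin m) ∧ IsIterExpansionOf m β n α := by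
  induction n with
  | zero => exact ⟨0, α, nofun, .refl 0 α⟩
  | succ n ih =>
    by_cases hα : α ∈ derangements (Fin (n + 1))
    · exact ⟨n + 1, α, hα, .refl _ α⟩
    · obtain ⟨a, ha⟩ : ∃ a, α a = a := by simpa [derangements] using hα
      obtain ⟨γ, rfl⟩ := exists_expand_eq a ha
      obtain ⟨m, β, hβ, hγ⟩ := ih γ
      exact ⟨m, β, hβ, .step m β n γ a hγ⟩

theorem involutive_iff_forall_mem_cycleType {X : Type*} [Fintype X] [DecidableEq X] {σ : Perm X} :
    Function.Involutive σ ↔ ∀ c ∈ σ.cycleType, c = 2 := by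
  have := Fact.mk Nat.prime_two
  rw [← pow_prime_eq_one_iff, sq, Perm.ext_iff]
  rfl

theorem stmt_15_general {n : ℕ} (α : Perm (Fin n)) :
    ∃ (m : ℕ) (β : Perm (Fin m)), β ∈ derangements (Fin m) ∧ β.cycleType = α.cycleType ∧
      (IsMaximalDiagram α → IsMaximalDiagram β) ∧ IsIterExpansionOf m β n α := by
  obtain ⟨m, β, hβ, hexp⟩ := exists_derangement_isIterExpansionOf α
  exact ⟨m, β, hβ, hexp.cycleType_eq, hexp.isMaximalDiagram, hexp⟩

/-- Every nontrivial quasi-diagram `α ∈ S_n` (an involution of `Fin n`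
with `α ≠ id`; `ζ = finRotate n`) is an iterated expansion of a chord diagram (a fixed-point
free involution); moreover if `α` is maximal (one orbit of `ζα`) then the chord diagram can
be chosen maximal. -/
theorem stmt_15 (n : ℕ) (hn : 0 < n) (α : Equiv.Perm (Fin n))
    (hα : ∀ i, α (α i) = i) (hne : α ≠ 1) :
    (∃ (m : ℕ) (β : Equiv.Perm (Fin m)),
      (∀ j, β (β j) = j) ∧ (∀ j, β j ≠ j) ∧ IsIterExpansionOf m β n α) ∧
    ((∀ x y : Fin n, (finRotate n * α).SameCycle x y) →
      ∃ (m : ℕ) (β : Equiv.Perm (Fin m)),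
        (∀ j, β (β j) = j) ∧ (∀ j, β j ≠ j) ∧
        (∀ x y : Fin m, (finRotate m * β).SameCycle x y) ∧
        IsIterExpansionOf m β n α) := by
  obtain ⟨m, β, hfree, hcycle, hmax, hexp⟩ := stmt_15_general α
  have hinv : Function.Involutive β := by
    rwa [involutive_iff_forall_mem_cycleType, hcycle, ← involutive_iff_forall_mem_cycleType]
  exact ⟨⟨m, β, hinv, hfree, hexp⟩, fun hα ↦ ⟨m, β, hinv, hfree, hmax hα, hexp⟩⟩
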